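/- If f ∈ F²_d is NC outer, then for every n ∈ ℕ and every strict row contraction Z = (Z_1,…,Z_d) of n×n complex matrices, the family α ↦ f(α) • Z^α is summable and the matrix f(Z) = ∑'_α f(α) • Z^α is invertible (IsUnit). -/

import Mathlib

noncomputable section

open scoped ComplexConjugate
open Matrix
open scoped ComplexOrder

abbrev Word (d : ℕ) := FreeMonoid (Fin d)

instance {d : ℕ} : DecidableEq (Word d) :=
  fun a b => decidable_of_iff (FreeMonoid.toList a = FreeMonoid.toList b)
    FreeMonoid.toList.injective.eq_iff

abbrev Fock (d : ℕ) := lp (fun _ : Word d => ℂ) 2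

abbrev fockBasis (d : ℕ) (α : Word d) : Fock d := lp.single 2 α (1 : ℂ)

/-- Product of the matrices `Z i` along the word `α`. -/
def wordProdM {d : ℕ} {n : Type} [Fintype n] [DecidableEq n]
    (Z : Fin d → Matrix n n ℂ) (α : Word d) : Matrix n n ℂ :=
  (α.toList.map Z).prod

/-- Evaluation of a power series with coefficients `c` at the matrix tuple `Z`. -/
def evalM {d : ℕ} {n : Type} [Fintype n] [DecidableEq n]
    (c : Word d → ℂ) (Z : Fin d → Matrix n n ℂ) : Matrix n n ℂ :=
  ∑' α : Word d, c α • wordProdM Z α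

def IsStrictRowContraction {d : ℕ} {n : Type} [Fintype n] [DecidableEq n]
    (Z : Fin d → Matrix n n ℂ) : Prop :=
  (1 - ∑ i, Z i * (Z i)ᴴ).PosDef

abbrev L2N := lp (fun _ : ℕ => ℂ) 2

def wordProdO {d : ℕ} (Z : Fin d → (L2N →L[ℂ] L2N)) (α : Word d) : L2N →L[ℂ] L2N :=
  (α.toList.map Z).prod

def evalO {d : ℕ} (c : Word d → ℂ) (Z : Fin d → (L2N →L[ℂ] L2N)) : L2N →L[ℂ] L2N :=
  ∑' α : Word d, c α • wordProdO Z α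

def IsStrictRowContractionO {d : ℕ} (Z : Fin d → (L2N →L[ℂ] L2N)) : Prop :=
  ∃ r : ℝ, r < 1 ∧
    ((r ^ 2 : ℂ) • (1 : L2N →L[ℂ] L2N)
      - ∑ i, Z i ∘L ContinuousLinearMap.adjoint (Z i)).IsPositive

/-- The singularity space `𝒮(f)`. -/
def SingSpace {d : ℕ} (f : Word d → ℂ) : Set (Fock d) :=
  {h | (∀ (n : ℕ) (Z : Fin d → Matrix (Fin n) (Fin n) ℂ) (y : Fin n → ℂ),
          IsStrictRowContraction Z → (evalM f Z)ᴴ *ᵥ y = 0 → (evalM (h ·) Z)ᴴ *ᵥ y = 0) ∧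
       (∀ (Z : Fin d → (L2N →L[ℂ] L2N)) (y : L2N),
          IsStrictRowContractionO Z → ContinuousLinearMap.adjoint (evalO f Z) y = 0 →
          ContinuousLinearMap.adjoint (evalO (h ·) Z) y = 0)}

def wordOp {d : ℕ} (R : Fin d → (Fock d →L[ℂ] Fock d)) (α : Word d) :
    Fock d →L[ℂ] Fock d :=
  (α.toList.map R).prod

/-- `f` is cyclic for the right creation operators. -/
def IsNCOuter {d : ℕ} (R : Fin d → (Fock d →L[ℂ] Fock d)) (f : Fock d) : Prop :=
  (Submodule.span ℂ {g : Fock d | ∃ α : Word d, g = wordOp R α f}).topologicalClosure = ⊤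

def IsNCInner {d : ℕ} (R : Fin d → (Fock d →L[ℂ] Fock d))
    (Θ : Fock d →L[ℂ] Fock d) : Prop :=
  (∀ x, ‖Θ x‖ = ‖x‖) ∧ ∀ i, Θ ∘L R i = R i ∘L Θ

open scoped MatrixOrder in
lemma exists_factor {n : ℕ} {M : Matrix (Fin n) (Fin n) ℂ} (hM : M.PosDef) :
    ∃ B C : Matrix (Fin n) (Fin n) ℂ, M = Bᴴ * B ∧ C * B = 1 := by
  obtain ⟨B, hB⟩ := CStarAlgebra.nonneg_iff_eq_star_mul_self.mp hM.posSemidef.nonneg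
  rw [Matrix.star_eq_conjTranspose] at hB
  refine ⟨B, M⁻¹ * Bᴴ, hB, ?_⟩
  rw [Matrix.mul_assoc, ← hB]
  exact Matrix.nonsing_inv_mul _ ((Matrix.isUnit_iff_isUnit_det _).mp hM.isUnit)

/-- Squared Euclidean norm. -/
def sqn {n : ℕ} (v : Fin n → ℂ) : ℝ := ∑ j, ‖v j‖ ^ 2

lemma sqn_nonneg {n : ℕ} (v : Fin n → ℂ) : 0 ≤ sqn v :=
  Finset.sum_nonneg fun _ _ => by positivity

lemma sqn_eq {n : ℕ} (v : Fin n → ℂ) : (sqn v : ℂ) = star v ⬝ᵥ v := by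
  simp [sqn, dotProduct, Complex.conj_mul']

lemma sqn_mulVec {n : ℕ} (A : Matrix (Fin n) (Fin n) ℂ) (v : Fin n → ℂ) :
    (sqn (A *ᵥ v) : ℂ) = star v ⬝ᵥ ((Aᴴ * A) *ᵥ v) := by
  rw [sqn_eq, star_mulVec, ← dotProduct_mulVec, mulVec_mulVec]

lemma sqn_balance {d n : ℕ} (Z : Fin d → Matrix (Fin n) (Fin n) ℂ)
    (B : Matrix (Fin n) (Fin n) ℂ) (hB : 1 - ∑ i, Z i * (Z i)ᴴ = Bᴴ * B) (v : Fin n → ℂ) :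
    sqn (B *ᵥ v) + ∑ i, sqn ((Z i)ᴴ *ᵥ v) = sqn v := by
  have h : ((sqn (B *ᵥ v) + ∑ i, sqn ((Z i)ᴴ *ᵥ v) : ℝ) : ℂ) = (sqn v : ℂ) := by
    push_cast
    simp only [sqn_mulVec, ← hB, conjTranspose_conjTranspose]
    rw [sqn_eq]
    rw [← dotProduct_sum, ← sum_mulVec, ← dotProduct_add, ← add_mulVec]
    simp
  exact_mod_cast h

/-- Words of length less than `N`. -/
def wordsLT (d : ℕ) : ℕ → Finset (Word d)
  | 0 => ∅
  | N + 1 => insert 1 ((Finset.univ ×ˢ wordsLT d N).image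
      fun p : Fin d × Word d => FreeMonoid.of p.1 * p.2)

lemma of_mul_inj {d : ℕ} {i j : Fin d} {a b : Word d}
    (h : FreeMonoid.of i * a = FreeMonoid.of j * b) : i = j ∧ a = b := by
  have h' := congrArg FreeMonoid.toList h
  simp only [FreeMonoid.toList_of_mul, List.cons.injEq] at h'
  exact ⟨h'.1, FreeMonoid.toList.injective h'.2⟩

lemma of_mul_ne_one {d : ℕ} (i : Fin d) (a : Word d) : FreeMonoid.of i * a ≠ 1 := by
  intro h
  have h' := congrArg FreeMonoid.toList h
  simp [FreeMonoid.toList_of_mul] at h'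

lemma mem_wordsLT {d : ℕ} (N : ℕ) (α : Word d) (h : α.length < N) : α ∈ wordsLT d N := by
  induction N generalizing α with
  | zero => omega
  | succ N ih =>
    induction α using FreeMonoid.casesOn with
    | one => simp [wordsLT]
    | of_mul i a =>
      rw [FreeMonoid.length_mul, FreeMonoid.length_of] at h
      exact Finset.mem_insert_of_mem (Finset.mem_image.mpr
        ⟨(i, a), by simpa using ih a (by omega), rfl⟩)

lemma sum_wordsLT {d : ℕ} (N : ℕ) (g : Word d → ℝ) :
    ∑ α ∈ wordsLT d (N + 1), g α =
      g 1 + ∑ i, ∑ α ∈ wordsLT d N, g (FreeMonoid.of i * α) := by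
  rw [wordsLT, Finset.sum_insert, Finset.sum_image, Finset.sum_product]
  · rintro ⟨i, a⟩ - ⟨j, b⟩ - h
    obtain ⟨h1, h2⟩ := of_mul_inj h
    exact Prod.ext h1 h2
  · intro h
    obtain ⟨p, -, hp⟩ := Finset.mem_image.mp h
    exact of_mul_ne_one _ _ hp

lemma wordProdM_one {d n : ℕ} (Z : Fin d → Matrix (Fin n) (Fin n) ℂ) :
    wordProdM Z 1 = 1 := by simp [wordProdM]

lemma wordProdM_mul {d n : ℕ} (Z : Fin d → Matrix (Fin n) (Fin n) ℂ) (a b : Word d) :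
    wordProdM Z (a * b) = wordProdM Z a * wordProdM Z b := by
  simp [wordProdM, FreeMonoid.toList_mul]

lemma wordProdM_of {d n : ℕ} (Z : Fin d → Matrix (Fin n) (Fin n) ℂ) (i : Fin d) :
    wordProdM Z (FreeMonoid.of i) = Z i := by simp [wordProdM]

lemma sum_bound {d n : ℕ} (Z : Fin d → Matrix (Fin n) (Fin n) ℂ)
    (B : Matrix (Fin n) (Fin n) ℂ) (hB : 1 - ∑ i, Z i * (Z i)ᴴ = Bᴴ * B) (N : ℕ)
    (v : Fin n → ℂ) :
    ∑ α ∈ wordsLT d N, sqn (B *ᵥ ((wordProdM Z α)ᴴ *ᵥ v)) ≤ sqn v := by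
  induction N generalizing v with
  | zero => simpa [wordsLT] using sqn_nonneg v
  | succ N ih =>
    rw [sum_wordsLT, ← sqn_balance Z B hB v]
    refine add_le_add (by simp [wordProdM_one]) (Finset.sum_le_sum fun i _ => ?_)
    refine le_trans (le_of_eq ?_) (ih ((Z i)ᴴ *ᵥ v))
    refine Finset.sum_congr rfl fun α _ => ?_
    rw [wordProdM_mul, wordProdM_of, conjTranspose_mul, ← mulVec_mulVec v]

lemma memlp_entry {d n : ℕ} (Z : Fin d → Matrix (Fin n) (Fin n) ℂ)
    (hZ : IsStrictRowContraction Z) (i j : Fin n) :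
    Memℓp (fun α : Word d => star (wordProdM Z α i j)) 2 := by
  obtain ⟨B, C, hB, hC⟩ := exists_factor hZ
  have key : ∀ k, Memℓp (fun α : Word d => (B *ᵥ ((wordProdM Z α)ᴴ *ᵥ Pi.single i 1)) k) 2 := by
    intro k
    refine memℓp_gen' (C := sqn (Pi.single i (1 : ℂ))) fun s => ?_
    have hs : s ⊆ wordsLT d (s.sup FreeMonoid.length + 1) := fun α hα =>
      mem_wordsLT _ _ (Nat.lt_succ_of_le (Finset.le_sup (f := FreeMonoid.length) hα))
    refine le_trans ?_ (sum_bound Z B hB (s.sup FreeMonoid.length + 1) (Pi.single i 1))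
    refine le_trans (Finset.sum_le_sum fun α _ => ?_)
      (Finset.sum_le_sum_of_subset_of_nonneg hs fun _ _ _ => sqn_nonneg _)
    have := Finset.single_le_sum
      (f := fun k => ‖(B *ᵥ ((wordProdM Z α)ᴴ *ᵥ Pi.single i 1)) k‖ ^ 2)
      (fun _ _ => by positivity) (Finset.mem_univ k)
    simpa [sqn] using this
  have h2 : (fun α : Word d => star (wordProdM Z α i j)) =
      fun α => ∑ k, C j k * (B *ᵥ ((wordProdM Z α)ᴴ *ᵥ Pi.single i 1)) k := by
    funext α
    change _ = (C *ᵥ (B *ᵥ ((wordProdM Z α)ᴴ *ᵥ Pi.single i 1))) j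
    rw [mulVec_mulVec, hC, one_mulVec]
    simp
  rw [h2]
  exact Memℓp.finsetSum _ fun k _ => (key k).const_mul _

/-- The vector representing the `(i,j)` entry of evaluation at `Z`. -/
def kvec {d n : ℕ} (Z : Fin d → Matrix (Fin n) (Fin n) ℂ)
    (hZ : IsStrictRowContraction Z) (i j : Fin n) : Fock d :=
  ⟨fun α : Word d => star (wordProdM Z α i j), memlp_entry Z hZ i j⟩

/-- Evaluation at `Z`, entrywise as bounded functionals. -/
def evF {d n : ℕ} (Z : Fin d → Matrix (Fin n) (Fin n) ℂ)
    (hZ : IsStrictRowContraction Z) (i j : Fin n) : Fock d →L[ℂ] ℂ :=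
  innerSL ℂ (kvec Z hZ i j)

/-- Evaluation at `Z`. -/
def evE {d n : ℕ} (Z : Fin d → Matrix (Fin n) (Fin n) ℂ)
    (hZ : IsStrictRowContraction Z) (g : Fock d) : Matrix (Fin n) (Fin n) ℂ :=
  Matrix.of fun i j => evF Z hZ i j g

lemma evE_hasSum {d n : ℕ} (Z : Fin d → Matrix (Fin n) (Fin n) ℂ)
    (hZ : IsStrictRowContraction Z) (g : Fock d) :
    HasSum (fun α : Word d => g α • wordProdM Z α) (evE Z hZ g) := by
  refine Pi.hasSum.mpr fun i => Pi.hasSum.mpr fun j => ?_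
  have := lp.hasSum_inner (𝕜 := ℂ) (kvec Z hZ i j) g
  simpa [kvec, evE, evF] using this

lemma evF_basis {d n : ℕ} (Z : Fin d → Matrix (Fin n) (Fin n) ℂ)
    (hZ : IsStrictRowContraction Z) (i j : Fin n) (α : Word d) :
    evF Z hZ i j (fockBasis d α) = wordProdM Z α i j := by
  simp [evF, fockBasis, lp.inner_single_right, kvec]

lemma evE_R {d n : ℕ} (Z : Fin d → Matrix (Fin n) (Fin n) ℂ)
    (hZ : IsStrictRowContraction Z) (R : Fin d → (Fock d →L[ℂ] Fock d))
    (hR : ∀ (i : Fin d) (α : Word d), R i (fockBasis d α) = fockBasis d (α * FreeMonoid.of i))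
    (l : Fin d) (g : Fock d) : evE Z hZ (R l g) = evE Z hZ g * Z l := by
  ext a b
  have h : (evF Z hZ a b).comp (R l) = ∑ c, Z l c b • evF Z hZ a c := by
    refine lp.ext_continuousLinearMap (by simp) fun α => ?_
    ext
    change evF Z hZ a b (R l (fockBasis d α)) = (∑ c, Z l c b • evF Z hZ a c) (fockBasis d α)
    rw [hR, evF_basis, wordProdM_mul, wordProdM_of]
    simp [evF_basis, Matrix.mul_apply, mul_comm]
  have h2 := DFunLike.congr_fun h g
  simp only [ContinuousLinearMap.comp_apply, _root_.sum_apply,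
    _root_.smul_apply, smul_eq_mul] at h2
  simp [evE, Matrix.mul_apply, h2, mul_comm]

lemma evE_wordOp {d n : ℕ} (Z : Fin d → Matrix (Fin n) (Fin n) ℂ)
    (hZ : IsStrictRowContraction Z) (R : Fin d → (Fock d →L[ℂ] Fock d))
    (hR : ∀ (i : Fin d) (α : Word d), R i (fockBasis d α) = fockBasis d (α * FreeMonoid.of i))
    (α : Word d) (g : Fock d) : ∃ A, evE Z hZ (wordOp R α g) = evE Z hZ g * A := by
  induction α using FreeMonoid.inductionOn' with
  | one => exact ⟨1, by simp [wordOp]⟩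
  | of_mul i a ih =>
    obtain ⟨A, hA⟩ := ih
    refine ⟨A * Z i, ?_⟩
    have : wordOp R (FreeMonoid.of i * a) g = R i (wordOp R a g) := by
      simp [wordOp, FreeMonoid.toList_of_mul]
    rw [this, evE_R Z hZ R hR, hA, Matrix.mul_assoc]

/-- **NC outer functions are pointwise invertible.**
If `f ∈ F²_d` is NC outer then for every strict row contraction `Z` of `n×n`
matrices the series defining `f(Z)` is summable and `f(Z)` is invertible. -/
theorem ncOuter_pointwise_invertible {d : ℕ} (hd : 1 ≤ d)
    (R : Fin d → (Fock d →L[ℂ] Fock d))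
    (hR : ∀ (i : Fin d) (α : Word d), R i (fockBasis d α) = fockBasis d (α * FreeMonoid.of i))
    (f : Fock d) (hf : IsNCOuter R f) :
    ∀ (n : ℕ) (Z : Fin d → Matrix (Fin n) (Fin n) ℂ), IsStrictRowContraction Z →
      (Summable fun α : Word d => f α • wordProdM Z α) ∧ IsUnit (evalM (f ·) Z) := by
  intro n Z hZ
  have hs := evE_hasSum Z hZ f
  refine ⟨hs.summable, ?_⟩
  have he : evalM (f ·) Z = evE Z hZ f := hs.tsum_eq
  rw [he, Matrix.isUnit_iff_isUnit_det, isUnit_iff_ne_zero]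
  intro hdet
  obtain ⟨y, hy0, hy⟩ := Matrix.exists_vecMul_eq_zero_iff.mpr hdet
  apply hy0
  -- the functionals `g ↦ (y E(g))_b`
  have key : ∀ (b : Fin n) (g : Fock d), (∑ a, y a • evF Z hZ a b) g = (y ᵥ* evE Z hZ g) b := by
    intro b g
    simp [vecMul, dotProduct, evE]
  have hker : ∀ (b : Fin n) (g : Fock d), (∑ a, y a • evF Z hZ a b) g = 0 := by
    intro b g
    have hle : (Submodule.span ℂ {g : Fock d | ∃ α : Word d, g = wordOp R α f}).topologicalClosure
        ≤ LinearMap.ker (∑ a, y a • evF Z hZ a b : Fock d →L[ℂ] ℂ).toLinearMap := by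
      refine Submodule.topologicalClosure_minimal _ (Submodule.span_le.mpr ?_)
        (ContinuousLinearMap.isClosed_ker _)
      rintro _ ⟨α, rfl⟩
      obtain ⟨A, hA⟩ := evE_wordOp Z hZ R hR α f
      change (∑ a, y a • evF Z hZ a b) (wordOp R α f) = 0
      rw [key, hA, ← vecMul_vecMul, hy, zero_vecMul]
      rfl
    have hg : g ∈ (Submodule.span ℂ
        {g : Fock d | ∃ α : Word d, g = wordOp R α f}).topologicalClosure := by
      rw [show _ = _ from hf]; trivial
    exact hle hg
  funext b
  have h1 := hker b (fockBasis d 1)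
  have h2 : evE Z hZ (fockBasis d 1) = 1 := by
    ext a c
    rw [← wordProdM_one Z, ← evF_basis Z hZ]
    rfl
  rw [key, h2, vecMul_one] at h1
  exact h1
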